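/- arXiv:2307.07014 — 2 statements merged into one kernel-verified Lean document; each statement's English description precedes it below -/
import Mathlib

section
/- Let M be a D-factored finite MDP whose initial distribution factorizes, d1(s) = ∏_{d=1}^D d1^d(z_d), let π_b be a factored policy, and let sub-policies π_e^d satisfy per-factor absolute continuity. Then importance weights of distinct factors are uncorrelated under the behaviour trajectory distribution: for all d ≠ d' and all 0 ≤ t, t' ≤ T−1, Cov_{P^τ_{π_b}}( ρ^d_{0:t}, ρ^{d'}_{0:t'} ) = 0; equivalently E_{P^τ_{π_b}}[ρ^d_{0:t} · ρ^{d'}_{0:t'}] = E_{P^τ_{π_b}}[ρ^d_{0:t}] · E_{P^τ_{π_b}}[ρ^{d'}_{0:t'}]. -/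
/-!
Because the initial distribution, the kernel and the policy all factorize, the behaviour trajectory
distribution is the product, over the factors `d`, of the trajectory distributions of the factor
chains with data `d1d d`, `pd d`, `πbd d` (`trajP_factor`). Each factor distribution has total mass
one (`sum_trajP`). The weight `ρ^d_{0:t}` is a function of the `d`-th factor trajectory alone
wherever the trajectory has positive probability (`rhoFac_of_pos`), so the claim is the
independence of distinct coordinates under a product distribution (`sum_prod_mul_two`,
`sum_prod_mul_one`).
-/

open scoped BigOperators Classical

/-- A `T`-step trajectory: states `s_0, …, s_T` and actions `a_0, …, a_{T-1}`. -/
abbrev Traj (S A : Type) (T : ℕ) := (Fin (T + 1) → S) × (Fin T → A)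

/-- Probability of the trajectory `τ` under initial distribution `d1`, transition kernel
`p` and policy `π`: `P_π(τ) = d1(s_0) ∏_{t=0}^{T-1} π(a_t|s_t) p(s_{t+1}|s_t,a_t)`. -/
def trajP {S A : Type} [Fintype S] [Fintype A] (T : ℕ)
    (d1 : S → ℝ) (p : S → A → S → ℝ) (π : S → A → ℝ) (τ : Traj S A T) : ℝ :=
  d1 (τ.1 0) *
    ∏ t : Fin T, π (τ.1 t.castSucc) (τ.2 t) * p (τ.1 t.castSucc) (τ.2 t) (τ.1 t.succ)

/-- The factor importance weight `ρ^d_{0:t}(τ)`: the product over `t' ≤ t` of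
`π_e^d(a^d_{t'}|z^d_{t'}) / π_b^d(a^d_{t'}|z^d_{t'})` on trajectories of positive
behaviour probability, and `0` otherwise. -/
noncomputable def rhoFac {D : ℕ} {Z Act : Fin D → Type}
    [∀ d, Fintype (Z d)] [∀ d, Fintype (Act d)] (T : ℕ)
    (d1 : (∀ d, Z d) → ℝ) (p : (∀ d, Z d) → (∀ d, Act d) → (∀ d, Z d) → ℝ)
    (πb : (∀ d, Z d) → (∀ d, Act d) → ℝ)
    (πbd πed : ∀ d, Z d → Act d → ℝ)
    (d : Fin D) (t : Fin T) (τ : Traj (∀ d, Z d) (∀ d, Act d) T) : ℝ :=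
  if 0 < trajP T d1 p πb τ then
    ∏ t' ∈ Finset.Iic t,
      πed d (τ.1 t'.castSucc d) (τ.2 t' d) / πbd d (τ.1 t'.castSucc d) (τ.2 t' d)
  else 0

/-- A trajectory of length `T + 1` is a first step `(s, a)` followed by a trajectory of length `T`
started from the law `p s a`. -/
lemma trajP_cons {S A : Type} [Fintype S] [Fintype A] (T : ℕ)
    (d1 : S → ℝ) (p : S → A → S → ℝ) (π : S → A → ℝ) (s : S) (σ : Fin (T + 1) → S)
    (a : A) (α : Fin T → A) :
    trajP (T + 1) d1 p π (Fin.cons s σ, Fin.cons a α) =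
      d1 s * (π s a * trajP T (p s a) p π (σ, α)) := by
  simp only [trajP, Fin.prod_univ_succ, Fin.castSucc_zero, Fin.cons_zero, Fin.cons_succ,
    ← Fin.succ_castSucc]
  ring

lemma sum_trajP {S A : Type} [Fintype S] [Fintype A] (T : ℕ)
    (p : S → A → S → ℝ) (π : S → A → ℝ) (hp : ∀ s a, ∑ s', p s a s' = 1)
    (hπ : ∀ s, ∑ a, π s a = 1) (d1 : S → ℝ) (hd1 : ∑ s, d1 s = 1) :
    ∑ τ : Traj S A T, trajP T d1 p π τ = 1 := by
  induction T generalizing d1 with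
  | zero =>
    rw [Fintype.sum_prod_type, ← hd1, ← (Equiv.funUnique (Fin 1) S).sum_comp]
    simp [trajP]
  | succ T ih =>
    rw [Fintype.sum_prod_type,
      ← (Fin.consEquiv fun _ : Fin (T + 2) => S).sum_comp, Fintype.sum_prod_type]
    have hs : ∀ s : S, ∑ σ : Fin (T + 1) → S, ∑ α : Fin (T + 1) → A,
        trajP (T + 1) d1 p π ((Fin.consEquiv fun _ : Fin (T + 2) => S) (s, σ), α) = d1 s := by
      intro s
      have hα : ∀ σ : Fin (T + 1) → S, ∑ α : Fin (T + 1) → A,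
          trajP (T + 1) d1 p π ((Fin.consEquiv fun _ : Fin (T + 2) => S) (s, σ), α) =
          ∑ a, ∑ α : Fin T → A, d1 s * (π s a * trajP T (p s a) p π (σ, α)) := by
        intro σ
        rw [← (Fin.consEquiv fun _ : Fin (T + 1) => A).sum_comp, Fintype.sum_prod_type]
        refine Finset.sum_congr rfl fun a _ => Finset.sum_congr rfl fun α _ => ?_
        exact trajP_cons T d1 p π s σ a α
      rw [Finset.sum_congr rfl fun σ _ => hα σ, Finset.sum_comm]
      simp_rw [← Finset.mul_sum]
      have ha : ∀ a, ∑ σ : Fin (T + 1) → S, ∑ α : Fin T → A, trajP T (p s a) p π (σ, α) = 1 := by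
        intro a
        rw [← ih (p s a) (hp s a), Fintype.sum_prod_type]
      simp_rw [ha, mul_one, hπ, mul_one]
    rw [Finset.sum_congr rfl fun s _ => hs s, hd1]

/-- Distinct coordinates are independent under a product distribution. -/
lemma sum_prod_mul_two {D : ℕ} {X : Fin D → Type} [∀ d, Fintype (X d)]
    (q f g : ∀ d, X d → ℝ) (hq : ∀ d, ∑ x, q d x = 1) {d d' : Fin D} (h : d ≠ d') :
    ∑ x : (∀ i, X i), (∏ i, q i (x i)) * (f d (x d) * g d' (x d')) =
      (∑ x, q d x * f d x) * ∑ x, q d' x * g d' x := by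
  have h1 : ∀ x : (∀ i, X i), (∏ i, q i (x i)) * (f d (x d) * g d' (x d')) =
      ∏ i, q i (x i) * ((if i = d then f i (x i) else 1) * (if i = d' then g i (x i) else 1)) := by
    intro x
    simp only [Finset.prod_mul_distrib, Finset.prod_ite_eq', Finset.mem_univ, if_true]
  have h2 : ∀ i, ∑ x, q i x * ((if i = d then f i x else 1) * (if i = d' then g i x else 1)) =
      (if i = d then ∑ x, q i x * f i x else 1) * (if i = d' then ∑ x, q i x * g i x else 1) := by
    intro i
    by_cases hi : i = d
    · subst hi; simp [h]
    · by_cases hi' : i = d'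
      · subst hi'; simp [hi]
      · simp [hi, hi', hq]
  rw [Finset.sum_congr rfl fun x _ => h1 x]
  have h3 := Fintype.prod_sum fun i (x : X i) =>
    q i x * ((if i = d then f i x else 1) * (if i = d' then g i x else 1))
  rw [← h3, Finset.prod_congr rfl fun i _ => h2 i]
  simp only [Finset.prod_mul_distrib, Finset.prod_ite_eq', Finset.mem_univ, if_true]

/-- The one-coordinate marginal of a product distribution. -/
lemma sum_prod_mul_one {D : ℕ} {X : Fin D → Type} [∀ d, Fintype (X d)]
    (q f : ∀ d, X d → ℝ) (hq : ∀ d, ∑ x, q d x = 1) {d d' : Fin D} (h : d ≠ d') :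
    ∑ x : (∀ i, X i), (∏ i, q i (x i)) * f d (x d) = ∑ x, q d x * f d x := by
  simpa [hq] using sum_prod_mul_two q f (fun _ _ => 1) hq h

/-- A trajectory of the product MDP is the same thing as a family of factor trajectories. -/
def trajEquiv {D : ℕ} (Z Act : Fin D → Type) (T : ℕ) :
    Traj (∀ d, Z d) (∀ d, Act d) T ≃ ∀ d, Traj (Z d) (Act d) T where
  toFun τ d := (fun t => τ.1 t d, fun t => τ.2 t d)
  invFun x := (fun t d => (x d).1 t, fun t d => (x d).2 t)
  left_inv _ := rfl
  right_inv _ := rfl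

lemma trajP_factor {D : ℕ} {Z Act : Fin D → Type} [∀ d, Fintype (Z d)] [∀ d, Fintype (Act d)]
    (T : ℕ) {d1 : (∀ d, Z d) → ℝ} {d1d : ∀ d, Z d → ℝ} (hd1 : ∀ s, d1 s = ∏ d, d1d d (s d))
    {p : (∀ d, Z d) → (∀ d, Act d) → (∀ d, Z d) → ℝ} {pd : ∀ d, Z d → Act d → Z d → ℝ}
    (hp : ∀ s a s', p s a s' = ∏ d, pd d (s d) (a d) (s' d))
    {πb : (∀ d, Z d) → (∀ d, Act d) → ℝ} {πbd : ∀ d, Z d → Act d → ℝ}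
    (hπb : ∀ s a, πb s a = ∏ d, πbd d (s d) (a d)) (τ : Traj (∀ d, Z d) (∀ d, Act d) T) :
    trajP T d1 p πb τ = ∏ d, trajP T (d1d d) (pd d) (πbd d) (trajEquiv Z Act T τ d) := by
  simp only [trajP, trajEquiv, Equiv.coe_fn_mk, hd1, hp, hπb, ← Finset.prod_mul_distrib]
  rw [Finset.prod_comm]
  simp only [Finset.prod_mul_distrib]

/-- The factor importance weight as a function of the factor trajectory alone, without the
convention that it vanishes on null trajectories. -/
noncomputable def facWeight {Z A : Type} (T : ℕ) (πb πe : Z → A → ℝ) (t : Fin T)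
    (x : Traj Z A T) : ℝ :=
  ∏ t' ∈ Finset.Iic t, πe (x.1 t'.castSucc) (x.2 t') / πb (x.1 t'.castSucc) (x.2 t')

lemma trajP_nonneg {S A : Type} [Fintype S] [Fintype A] (T : ℕ)
    {d1 : S → ℝ} {p : S → A → S → ℝ} {π : S → A → ℝ} (hd1 : ∀ s, 0 ≤ d1 s)
    (hp : ∀ s a s', 0 ≤ p s a s') (hπ : ∀ s a, 0 ≤ π s a) (τ : Traj S A T) :
    0 ≤ trajP T d1 p π τ :=
  mul_nonneg (hd1 _) (Finset.prod_nonneg fun _ _ => mul_nonneg (hπ _ _) (hp _ _ _))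

lemma rhoFac_of_pos {D : ℕ} {Z Act : Fin D → Type} [∀ d, Fintype (Z d)] [∀ d, Fintype (Act d)]
    (T : ℕ) {d1 : (∀ d, Z d) → ℝ} {p : (∀ d, Z d) → (∀ d, Act d) → (∀ d, Z d) → ℝ}
    {πb : (∀ d, Z d) → (∀ d, Act d) → ℝ} (πbd πed : ∀ d, Z d → Act d → ℝ)
    (d : Fin D) (t : Fin T) {τ : Traj (∀ d, Z d) (∀ d, Act d) T}
    (hτ : 0 < trajP T d1 p πb τ) :
    rhoFac T d1 p πb πbd πed d t τ =
      facWeight T (πbd d) (πed d) t (trajEquiv Z Act T τ d) :=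
  if_pos hτ

/-- In a `D`-factored finite MDP whose initial distribution factorizes,
with a factored behaviour policy and evaluation sub-policies satisfying per-factor
absolute continuity, importance weights of distinct factors are uncorrelated under the
behaviour trajectory distribution:
`Cov(ρ^d_{0:t}, ρ^{d'}_{0:t'}) = 0`, i.e.
`E[ρ^d_{0:t} · ρ^{d'}_{0:t'}] = E[ρ^d_{0:t}] · E[ρ^{d'}_{0:t'}]`. -/
theorem factor_importance_weights_uncorrelated
    {D : ℕ} (Z Act : Fin D → Type)
    [∀ d, Fintype (Z d)] [∀ d, Fintype (Act d)]
    [∀ d, Nonempty (Z d)] [∀ d, Nonempty (Act d)]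
    (T : ℕ)
    -- factorized initial distribution
    (d1 : (∀ d, Z d) → ℝ)
    (d1d : ∀ d, Z d → ℝ)
    (hd1d_nonneg : ∀ d z, 0 ≤ d1d d z) (hd1d_sum : ∀ d, ∑ z, d1d d z = 1)
    (hd1 : ∀ s, d1 s = ∏ d, d1d d (s d))
    -- factorized transition kernel
    (p : (∀ d, Z d) → (∀ d, Act d) → (∀ d, Z d) → ℝ)
    (pd : ∀ d, Z d → Act d → Z d → ℝ)
    (hpd_nonneg : ∀ d z a z', 0 ≤ pd d z a z') (hpd_sum : ∀ d z a, ∑ z', pd d z a z' = 1)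
    (hp : ∀ s a s', p s a s' = ∏ d, pd d (s d) (a d) (s' d))
    -- factored behaviour policy
    (πb : (∀ d, Z d) → (∀ d, Act d) → ℝ)
    (πbd : ∀ d, Z d → Act d → ℝ)
    (hπbd_nonneg : ∀ d z a, 0 ≤ πbd d z a) (hπbd_sum : ∀ d z, ∑ a, πbd d z a = 1)
    (hπb : ∀ s a, πb s a = ∏ d, πbd d (s d) (a d))
    -- evaluation sub-policies with per-factor absolute continuity
    (πed : ∀ d, Z d → Act d → ℝ)
    (hπed_nonneg : ∀ d z a, 0 ≤ πed d z a) (hπed_sum : ∀ d z, ∑ a, πed d z a = 1)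
    (habs : ∀ d z a, πbd d z a = 0 → πed d z a = 0)
    (d d' : Fin D) (hdd' : d ≠ d') (t t' : Fin T) :
    (∑ τ : Traj (∀ d, Z d) (∀ d, Act d) T,
        trajP T d1 p πb τ *
          (rhoFac T d1 p πb πbd πed d t τ * rhoFac T d1 p πb πbd πed d' t' τ))
      = (∑ τ : Traj (∀ d, Z d) (∀ d, Act d) T,
          trajP T d1 p πb τ * rhoFac T d1 p πb πbd πed d t τ) *
        (∑ τ : Traj (∀ d, Z d) (∀ d, Act d) T,
          trajP T d1 p πb τ * rhoFac T d1 p πb πbd πed d' t' τ) := by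
  have hnn : ∀ τ, 0 ≤ trajP T d1 p πb τ :=
    trajP_nonneg T (fun s => hd1 s ▸ Finset.prod_nonneg fun _ _ => hd1d_nonneg _ _)
      (fun s a s' => hp s a s' ▸ Finset.prod_nonneg fun _ _ => hpd_nonneg _ _ _ _)
      (fun s a => hπb s a ▸ Finset.prod_nonneg fun _ _ => hπbd_nonneg _ _ _)
  let e := trajEquiv Z Act T
  let q : ∀ i, Traj (Z i) (Act i) T → ℝ := fun i => trajP T (d1d i) (pd i) (πbd i)
  let w : Fin T → ∀ i, Traj (Z i) (Act i) T → ℝ := fun u i => facWeight T (πbd i) (πed i) u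
  have hq : ∀ i, ∑ x, q i x = 1 := fun i =>
    sum_trajP T (pd i) (πbd i) (hpd_sum i) (hπbd_sum i) (d1d i) (hd1d_sum i)
  have hP : ∀ τ, trajP T d1 p πb τ = ∏ i, q i (e τ i) := trajP_factor T hd1 hp hπb
  -- On null trajectories both sides vanish, so `ρ` may be replaced by the factor weight.
  have h1 : ∀ i u τ, trajP T d1 p πb τ * rhoFac T d1 p πb πbd πed i u τ =
      (∏ j, q j (e τ j)) * w u i (e τ i) := by
    intro i u τ
    rw [← hP]
    rcases (hnn τ).eq_or_lt with h0 | h0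
    · simp [← h0]
    · rw [rhoFac_of_pos T πbd πed i u h0]
  have h2 : ∀ τ, trajP T d1 p πb τ *
      (rhoFac T d1 p πb πbd πed d t τ * rhoFac T d1 p πb πbd πed d' t' τ) =
      (∏ j, q j (e τ j)) * (w t d (e τ d) * w t' d' (e τ d')) := by
    intro τ
    rw [← hP]
    rcases (hnn τ).eq_or_lt with h0 | h0
    · simp [← h0]
    · rw [rhoFac_of_pos T πbd πed d t h0, rhoFac_of_pos T πbd πed d' t' h0]
  simp_rw [h1, h2]
  rw [e.sum_comp fun x => (∏ j, q j (x j)) * (w t d (x d) * w t' d' (x d')),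
    e.sum_comp fun x => (∏ j, q j (x j)) * w t d (x d),
    e.sum_comp fun x => (∏ j, q j (x j)) * w t' d' (x d'),
    sum_prod_mul_two q (w t) (w t') hq hdd', sum_prod_mul_one q (w t) hq hdd',
    sum_prod_mul_one q (w t') hq hdd'.symm]
end

section
/- Let {S_1, …, S_K} be a partition of the factor index set {1, …, D}. Let M be a finite MDP whose state and action spaces are products S = ∏_{d=1}^D Z_d, A = ∏_{d=1}^D A_d, whose transition kernel factorizes across the groups as p(s'|s,a) = ∏_{k=1}^K p^k((z')^{S_k} | z^{S_k}, a^{S_k}) and whose reward satisfies r(s,a) = Σ_{k=1}^K r^k(z^{S_k}, a^{S_k}), where x^{S_k} denotes the tuple of components indexed by S_k. Suppose both π_b and π_e factorize according to the same partition, π(a|s) = ∏_{k=1}^K π^k(a^{S_k} | z^{S_k}), with per-group absolute continuity (π_b^k(a^{S_k}|z^{S_k}) = 0 ⟹ π_e^k(a^{S_k}|z^{S_k}) = 0). Define the group importance weight ρ^k_{0:t}(τ) = ∏_{t'=0}^{t} π_e^k(a^{S_k}_{t'} | z^{S_k}_{t'}) / π_b^k(a^{S_k}_{t'} | z^{S_k}_{t'}).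 Then for N i.i.d. T-step trajectories τ^(1), …, τ^(N) ∼ P^τ_{π_b}, the grouped decomposed IS estimator is unbiased: E[ Σ_{k=1}^K (1/N) Σ_{n=1}^N ρ^k_{0:T-1}(τ^(n)) Σ_{t=0}^{T-1} γ^t r^k(z^{(n),S_k}_t, a^{(n),S_k}_t) ] = V_{π_e}. -/
/-! For a fixed group `k`, reweighting `P_{π_b}` by `ρ^k` turns it into the trajectory law of the
mixed policy that uses `π_e^k` on group `k` and `π_b^j` on every other group; per-group absolute
continuity is what makes the cancellation valid (`trajP_mul_weight`). Under a factored kernel and a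
factored policy, the law of the group-`k` subtrajectory depends only on `d1`, on `p^k` and on the
`k`-th policy factor, since the other factors sum out to one at every step
(`sum_trajP_congr_group`, by induction on the horizon). The mixed policy and `π_e` therefore give
the same expectation to the group-`k` return. Linearity over the groups and over the `N` samples,
whose joint law is a product of probability distributions (`sum_prod_mul_coord`), finishes the
proof. -/

open scoped BigOperators Classical

/-! ### Sums over product spaces -/

/-- Under a product of weights of total mass one, a function of the `k`-th coordinate has its
expectation under the `k`-th factor. Nonnegativity of the weights plays no role. -/
lemma sum_prod_mul_coord {ι : Type} [Fintype ι] [DecidableEq ι] (X : ι → Type)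
    [∀ i, Fintype (X i)]
    (q : ∀ i, X i → ℝ) (hq : ∀ i, ∑ x, q i x = 1) (k : ι) (ψ : X k → ℝ) :
    ∑ f : ∀ i, X i, (∏ i, q i (f i)) * ψ (f k) = ∑ x, q k x * ψ x := by
  -- The test function, extended by `1` in the coordinates other than `k`.
  let Ψ : ∀ i, X i → ℝ := Function.update (fun _ _ => 1) k ψ
  have hΨk : Ψ k = ψ := Function.update_self ..
  have hΨ : ∀ i, i ≠ k → Ψ i = fun _ => 1 := fun i hi => Function.update_of_ne hi ..
  have h1 : ∀ f : ∀ i, X i, (∏ i, q i (f i)) * ψ (f k) = ∏ i, q i (f i) * Ψ i (f i) := by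
    intro f
    rw [Finset.prod_mul_distrib]
    congr 1
    rw [Fintype.prod_eq_single k (fun i hi => by rw [hΨ i hi]), hΨk]
  simp_rw [h1]
  rw [← Fintype.prod_sum (fun i x => q i x * Ψ i x),
    Fintype.prod_eq_single k (fun i hi => by simp [hΨ i hi, hq]), hΨk]

/-- A tuple indexed by `Fin D` is the same as the family of its restrictions to the blocks of a
partition. -/
noncomputable def blockEquiv {D K : ℕ} (G : Fin K → Finset (Fin D))
    (hdisj : ∀ k k', k ≠ k' → Disjoint (G k) (G k'))
    (hcover : ∀ d : Fin D, ∃ k, d ∈ G k) (X : Fin D → Type) :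
    (∀ d, X d) ≃ (∀ k, ∀ d : {x // x ∈ G k}, X d.1) :=
  Equiv.ofBijective (fun x _ d => x d.1) <| by
    constructor
    · intro x y h
      funext d
      obtain ⟨k, hk⟩ := hcover d
      exact congrFun (congrFun h k) ⟨d, hk⟩
    · intro y
      choose b hb using hcover
      refine ⟨fun d => y (b d) ⟨d, hb d⟩, ?_⟩
      funext k ⟨d, hd⟩
      have hk : b d = k := by
        by_contra hne
        exact Finset.disjoint_left.mp (hdisj _ _ hne) (hb d) hd
      subst hk
      rfl

lemma sum_block_prod {D K : ℕ} {G : Fin K → Finset (Fin D)}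
    (hdisj : ∀ k k', k ≠ k' → Disjoint (G k) (G k'))
    (hcover : ∀ d : Fin D, ∃ k, d ∈ G k)
    (X : Fin D → Type) [∀ d, Fintype (X d)]
    (q : ∀ k, (∀ d : {x // x ∈ G k}, X d.1) → ℝ) (hq : ∀ k, ∑ x, q k x = 1) :
    ∑ x : ∀ d, X d, ∏ j, q j (fun d => x d.1) = 1 := by
  rw [Fintype.sum_equiv (blockEquiv G hdisj hcover X)
    (fun x => ∏ j, q j (fun d => x d.1)) (fun y => ∏ j, q j (y j))
    (fun _ => rfl), ← Fintype.prod_sum]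
  simp [hq]

lemma sum_block_prod_mul {D K : ℕ} {G : Fin K → Finset (Fin D)}
    (hdisj : ∀ k k', k ≠ k' → Disjoint (G k) (G k'))
    (hcover : ∀ d : Fin D, ∃ k, d ∈ G k)
    (X : Fin D → Type) [∀ d, Fintype (X d)]
    (q : ∀ k, (∀ d : {x // x ∈ G k}, X d.1) → ℝ) (hq : ∀ k, ∑ x, q k x = 1)
    (k : Fin K) (ψ : (∀ d : {x // x ∈ G k}, X d.1) → ℝ) :
    ∑ x : ∀ d, X d, (∏ j, q j (fun d => x d.1)) * ψ (fun d => x d.1) = ∑ x, q k x * ψ x := by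
  rw [Fintype.sum_equiv (blockEquiv G hdisj hcover X)
    (fun x => (∏ j, q j (fun d => x d.1)) * ψ (fun d => x d.1))
    (fun y => (∏ j, q j (y j)) * ψ (y k))
    (fun _ => rfl)]
  exact sum_prod_mul_coord _ q hq k ψ

/-! ### Trajectories, one step at a time -/

/-- A `T`-step trajectory extended by one action and one state. -/
def Traj.snoc {S A : Type} {T : ℕ} (τ : Traj S A T) (a : A) (s : S) : Traj S A (T + 1) :=
  (Fin.snoc (α := fun _ => S) τ.1 s, Fin.snoc (α := fun _ => A) τ.2 a)

/-- Splitting off the last action and the last state of a trajectory. -/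
def Traj.snocEquiv (S A : Type) (T : ℕ) : Traj S A T × A × S ≃ Traj S A (T + 1) where
  toFun x := x.1.snoc x.2.1 x.2.2
  invFun τ := ((fun i => τ.1 i.castSucc, fun i => τ.2 i.castSucc),
    τ.2 (Fin.last _), τ.1 (Fin.last _))
  left_inv x := by simp [Traj.snoc]
  right_inv τ := by
    refine Prod.ext ?_ ?_
    · funext i
      refine Fin.lastCases ?_ (fun i => ?_) i <;> simp [Traj.snoc]
    · funext i
      refine Fin.lastCases ?_ (fun i => ?_) i <;> simp [Traj.snoc]

lemma trajP_snoc {S A : Type} [Fintype S] [Fintype A] {T : ℕ}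
    (d1 : S → ℝ) (p : S → A → S → ℝ) (π : S → A → ℝ) (τ : Traj S A T) (a : A) (s : S) :
    trajP (T + 1) d1 p π (τ.snoc a s) =
      trajP T d1 p π τ * (π (τ.1 (Fin.last T)) a * p (τ.1 (Fin.last T)) a s) := by
  have h0 : (τ.snoc a s).1 0 = τ.1 0 := by
    change Fin.snoc (α := fun _ => S) τ.1 s (Fin.castSucc 0) = _
    rw [Fin.snoc_castSucc]
  have hs : ∀ i : Fin (T + 1), (τ.snoc a s).1 i.castSucc = τ.1 i := fun i => by
    simp [Traj.snoc]
  have hs' : ∀ i : Fin T, (τ.snoc a s).1 i.castSucc.succ = τ.1 i.succ := fun i => by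
    rw [Fin.succ_castSucc, hs]
  have hl : (τ.snoc a s).1 (Fin.last T).succ = s := by
    rw [Fin.succ_last]; simp [Traj.snoc]
  have ha : ∀ i : Fin T, (τ.snoc a s).2 i.castSucc = τ.2 i := fun i => by simp [Traj.snoc]
  have hal : (τ.snoc a s).2 (Fin.last T) = a := by simp [Traj.snoc]
  unfold trajP
  rw [Fin.prod_univ_castSucc, h0]
  simp only [hs, hs', hl, ha, hal]
  ring

/-- Conditioning on the first `T` steps. -/
lemma sum_trajP_succ {S A : Type} [Fintype S] [Fintype A] (T : ℕ)
    (d1 : S → ℝ) (p : S → A → S → ℝ) (π : S → A → ℝ) (g : Traj S A (T + 1) → ℝ) :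
    ∑ τ, trajP (T + 1) d1 p π τ * g τ =
      ∑ τ : Traj S A T, trajP T d1 p π τ *
        ∑ a, π (τ.1 (Fin.last T)) a * ∑ s, p (τ.1 (Fin.last T)) a s * g (τ.snoc a s) := by
  rw [← Fintype.sum_equiv (Traj.snocEquiv S A T) (fun x => trajP T d1 p π x.1 *
    (π (x.1.1 (Fin.last T)) x.2.1 * p (x.1.1 (Fin.last T)) x.2.1 x.2.2) *
      g (x.1.snoc x.2.1 x.2.2)) _ (fun x => by
        rw [← trajP_snoc]; rfl), Fintype.sum_prod_type]
  refine Finset.sum_congr rfl fun τ _ => ?_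
  rw [Fintype.sum_prod_type]
  simp only [Finset.mul_sum]
  refine Finset.sum_congr rfl fun a _ => Finset.sum_congr rfl fun s _ => ?_
  ring

lemma trajP_zero_congr {S A : Type} [Fintype S] [Fintype A]
    (d1 : S → ℝ) (p : S → A → S → ℝ) (π π' : S → A → ℝ) (τ : Traj S A 0) :
    trajP 0 d1 p π τ = trajP 0 d1 p π' τ := by
  simp [trajP]

lemma sum_trajP_eq_one {S A : Type} [Fintype S] [Fintype A] (T : ℕ)
    (d1 : S → ℝ) (p : S → A → S → ℝ) (π : S → A → ℝ) (hd1 : ∑ s, d1 s = 1)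
    (hp : ∀ s a, ∑ s', p s a s' = 1) (hπ : ∀ s, ∑ a, π s a = 1) :
    ∑ τ, trajP T d1 p π τ = 1 := by
  induction T with
  | zero =>
    rw [Fintype.sum_prod_type, ← hd1]
    exact Fintype.sum_equiv (Equiv.funUnique (Fin 1) S) _ _ (fun f => by simp [trajP])
  | succ T ih =>
    have h := sum_trajP_succ T d1 p π (fun _ => 1)
    simpa [hp, hπ, ih] using h

/-! ### Group subtrajectories and importance weights -/

section Groups

variable {D K : ℕ} {G : Fin K → Finset (Fin D)}
  {Z Act : Fin D → Type}

/-- The subtrajectory of the components in group `k`. -/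
def Traj.group (G : Fin K → Finset (Fin D)) (k : Fin K) {T : ℕ}
    (τ : Traj (∀ d, Z d) (∀ d, Act d) T) :
    Traj (∀ d : {x // x ∈ G k}, Z d.1) (∀ d : {x // x ∈ G k}, Act d.1) T :=
  (fun t d => τ.1 t d.1, fun t d => τ.2 t d.1)

lemma Traj.group_snoc (k : Fin K) {T : ℕ} (τ : Traj (∀ d, Z d) (∀ d, Act d) T)
    (a : ∀ d, Act d) (s : ∀ d, Z d) :
    (τ.snoc a s).group G k = (τ.group G k).snoc (fun d => a d.1) (fun d => s d.1) := by
  refine Prod.ext ?_ ?_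
  · funext i
    refine Fin.lastCases ?_ (fun i => ?_) i <;> simp [Traj.snoc, Traj.group]
  · funext i
    refine Fin.lastCases ?_ (fun i => ?_) i <;> simp [Traj.snoc, Traj.group]

variable [∀ d, Fintype (Z d)] [∀ d, Fintype (Act d)]

/-- The law of the group-`k` subtrajectory depends on a factored policy only through its `k`-th
factor. -/
lemma sum_trajP_congr_group
    (hdisj : ∀ k k', k ≠ k' → Disjoint (G k) (G k'))
    (hcover : ∀ d : Fin D, ∃ k, d ∈ G k)
    (d1 : (∀ d, Z d) → ℝ)
    (p : (∀ d, Z d) → (∀ d, Act d) → (∀ d, Z d) → ℝ)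
    (pk : ∀ k : Fin K,
      (∀ d : {x // x ∈ G k}, Z d.1) → (∀ d : {x // x ∈ G k}, Act d.1) →
        (∀ d : {x // x ∈ G k}, Z d.1) → ℝ)
    (hpk_sum : ∀ k z a, ∑ z', pk k z a z' = 1)
    (hp : ∀ s a s', p s a s' =
      ∏ k, pk k (fun d => s d.1) (fun d => a d.1) (fun d => s' d.1))
    (π π' : (∀ d, Z d) → (∀ d, Act d) → ℝ)
    (πk πk' : ∀ k : Fin K,
      (∀ d : {x // x ∈ G k}, Z d.1) → (∀ d : {x // x ∈ G k}, Act d.1) → ℝ)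
    (hπk_sum : ∀ k z, ∑ a, πk k z a = 1) (hπk'_sum : ∀ k z, ∑ a, πk' k z a = 1)
    (hπ : ∀ s a, π s a = ∏ k, πk k (fun d => s d.1) (fun d => a d.1))
    (hπ' : ∀ s a, π' s a = ∏ k, πk' k (fun d => s d.1) (fun d => a d.1))
    (k : Fin K) (hk : πk k = πk' k) (T : ℕ)
    (g : Traj (∀ d : {x // x ∈ G k}, Z d.1) (∀ d : {x // x ∈ G k}, Act d.1) T → ℝ) :
    ∑ τ, trajP T d1 p π τ * g (τ.group G k) = ∑ τ, trajP T d1 p π' τ * g (τ.group G k) := by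
  induction T with
  | zero => exact Finset.sum_congr rfl fun τ _ => by rw [trajP_zero_congr d1 p π π']
  | succ T ih =>
    -- The conditional expectation of `g` given the first `T` steps sees only group `k`.
    have key : ∀ (σ : (∀ d, Z d) → (∀ d, Act d) → ℝ)
        (σk : ∀ k : Fin K, (∀ d : {x // x ∈ G k}, Z d.1) →
          (∀ d : {x // x ∈ G k}, Act d.1) → ℝ)
        (_ : ∀ k z, ∑ a, σk k z a = 1)
        (_ : ∀ s a, σ s a = ∏ k, σk k (fun d => s d.1) (fun d => a d.1)),
        ∑ τ, trajP (T + 1) d1 p σ τ * g (τ.group G k) =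
          ∑ τ : Traj (∀ d, Z d) (∀ d, Act d) T, trajP T d1 p σ τ *
            (fun x => ∑ a, σk k (x.1 (Fin.last T)) a *
              ∑ z, pk k (x.1 (Fin.last T)) a z * g (x.snoc a z)) (τ.group G k) := by
      intro σ σk hσ1 hσ
      rw [sum_trajP_succ]
      refine Finset.sum_congr rfl fun τ _ => ?_
      congr 1
      simp only [Traj.group_snoc]
      refine Eq.trans ?_ (sum_block_prod_mul hdisj hcover Act
        (fun j => σk j (fun d => τ.1 (Fin.last T) d.1)) (fun j => hσ1 j _) k
        (fun a => ∑ z, pk k (fun d => τ.1 (Fin.last T) d.1) a z *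
          g ((τ.group G k).snoc a z)))
      refine Finset.sum_congr rfl fun a _ => ?_
      rw [hσ]
      congr 1
      simp only [hp]
      exact sum_block_prod_mul hdisj hcover Z
        (fun j => pk j (fun d => τ.1 (Fin.last T) d.1) (fun d => a d.1))
        (fun j => hpk_sum j _ _) k (fun z => g ((τ.group G k).snoc (fun d => a d.1) z))
    rw [key π πk hπk_sum hπ, key π' πk' hπk'_sum hπ', hk]
    exact ih (fun x => ∑ a, πk' k (x.1 (Fin.last T)) a *
      ∑ z, pk k (x.1 (Fin.last T)) a z * g (x.snoc a z))

/-- Reweighting the behaviour law by the group-`k` importance weight gives the trajectory law of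
the policy whose `k`-th factor is `πek k` and whose other factors are those of `πb`. -/
lemma trajP_mul_weight
    (d1 : (∀ d, Z d) → ℝ)
    (p : (∀ d, Z d) → (∀ d, Act d) → (∀ d, Z d) → ℝ)
    (πb : (∀ d, Z d) → (∀ d, Act d) → ℝ)
    (πbk πek : ∀ k : Fin K,
      (∀ d : {x // x ∈ G k}, Z d.1) → (∀ d : {x // x ∈ G k}, Act d.1) → ℝ)
    (hπb : ∀ s a, πb s a = ∏ k, πbk k (fun d => s d.1) (fun d => a d.1))
    (habs : ∀ k z a, πbk k z a = 0 → πek k z a = 0) (k : Fin K) (T : ℕ)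
    (τ : Traj (∀ d, Z d) (∀ d, Act d) T) :
    trajP T d1 p πb τ * ∏ t' : Fin T,
        πek k (fun d => τ.1 t'.castSucc d.1) (fun d => τ.2 t' d.1) /
          πbk k (fun d => τ.1 t'.castSucc d.1) (fun d => τ.2 t' d.1) =
      trajP T d1 p (fun s a => ∏ j, Function.update πbk k (πek k) j
        (fun d => s d.1) (fun d => a d.1)) τ := by
  unfold trajP
  rw [mul_assoc, ← Finset.prod_mul_distrib]
  congr 1
  refine Finset.prod_congr rfl fun t _ => ?_
  rw [hπb, mul_right_comm]
  congr 1
  beta_reduce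
  rw [Fintype.prod_eq_mul_prod_compl k, Fintype.prod_eq_mul_prod_compl k, mul_right_comm,
    Function.update_self]
  congr 1
  · exact mul_div_cancel_of_imp' (habs _ _ _)
  · refine Finset.prod_congr rfl fun j hj => ?_
    rw [Function.update_of_ne (by simpa using hj)]

end Groups

/-! ### Unbiasedness -/

/-- Let `{S_1, …, S_K}` be a partition of the factor indices, and let the
MDP's transition kernel, reward, and both policies factorize across the groups of the
partition, with per-group absolute continuity. Then the grouped decomposed IS estimator
computed from `N` i.i.d. trajectories drawn from `π_b` is an unbiased estimator of
`V_{π_e}`. -/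
theorem grouped_decomposed_IS_unbiased
    {D K : ℕ} (G : Fin K → Finset (Fin D))
    -- {S_1, …, S_K} is a partition of {1, …, D}
    (hdisj : ∀ k k', k ≠ k' → Disjoint (G k) (G k'))
    (hcover : ∀ d : Fin D, ∃ k, d ∈ G k)
    (Z Act : Fin D → Type)
    [∀ d, Fintype (Z d)] [∀ d, Fintype (Act d)]
    [∀ d, Nonempty (Z d)] [∀ d, Nonempty (Act d)]
    (T N : ℕ) (hN : 0 < N)
    (γ : ℝ) (hγ0 : 0 ≤ γ) (hγ1 : γ ≤ 1)
    -- initial distribution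
    (d1 : (∀ d, Z d) → ℝ) (hd1_nonneg : ∀ s, 0 ≤ d1 s) (hd1_sum : ∑ s, d1 s = 1)
    -- full MDP transition kernel and reward
    (p : (∀ d, Z d) → (∀ d, Act d) → (∀ d, Z d) → ℝ)
    (r : (∀ d, Z d) → (∀ d, Act d) → ℝ)
    -- group transition kernels and rewards
    (pk : ∀ k : Fin K,
      (∀ d : {x // x ∈ G k}, Z d.1) → (∀ d : {x // x ∈ G k}, Act d.1) →
        (∀ d : {x // x ∈ G k}, Z d.1) → ℝ)
    (rk : ∀ k : Fin K,
      (∀ d : {x // x ∈ G k}, Z d.1) → (∀ d : {x // x ∈ G k}, Act d.1) → ℝ)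
    (hpk_nonneg : ∀ k z a z', 0 ≤ pk k z a z')
    (hpk_sum : ∀ k z a, ∑ z', pk k z a z' = 1)
    -- factorization of transition kernel and reward across groups
    (hp : ∀ s a s', p s a s' =
      ∏ k, pk k (fun d => s d.1) (fun d => a d.1) (fun d => s' d.1))
    (hr : ∀ s a, r s a = ∑ k, rk k (fun d => s d.1) (fun d => a d.1))
    -- behaviour and evaluation policies, factored across the same groups
    (πb πe : (∀ d, Z d) → (∀ d, Act d) → ℝ)
    (πbk πek : ∀ k : Fin K,
      (∀ d : {x // x ∈ G k}, Z d.1) → (∀ d : {x // x ∈ G k}, Act d.1) → ℝ)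
    (hπbk_nonneg : ∀ k z a, 0 ≤ πbk k z a) (hπbk_sum : ∀ k z, ∑ a, πbk k z a = 1)
    (hπek_nonneg : ∀ k z a, 0 ≤ πek k z a) (hπek_sum : ∀ k z, ∑ a, πek k z a = 1)
    (hπb : ∀ s a, πb s a = ∏ k, πbk k (fun d => s d.1) (fun d => a d.1))
    (hπe : ∀ s a, πe s a = ∏ k, πek k (fun d => s d.1) (fun d => a d.1))
    -- per-group absolute continuity
    (habs : ∀ k z a, πbk k z a = 0 → πek k z a = 0) :
    -- expectation (over N i.i.d. trajectories from π_b) of the grouped decomposed IS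
    -- estimator
    (∑ τs : Fin N → Traj (∀ d, Z d) (∀ d, Act d) T,
        (∏ n, trajP T d1 p πb (τs n)) *
          (∑ k, (1 / (N : ℝ)) * ∑ n,
            (if 0 < trajP T d1 p πb (τs n) then
                ∏ t' : Fin T,
                  πek k (fun d => (τs n).1 t'.castSucc d.1) (fun d => (τs n).2 t' d.1) /
                    πbk k (fun d => (τs n).1 t'.castSucc d.1) (fun d => (τs n).2 t' d.1)
              else 0) *
              ∑ t : Fin T, γ ^ (t : ℕ) *
                rk k (fun d => (τs n).1 t.castSucc d.1) (fun d => (τs n).2 t d.1)))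
    -- equals the value of the evaluation policy
    = ∑ τ : Traj (∀ d, Z d) (∀ d, Act d) T,
        trajP T d1 p πe τ * ∑ t : Fin T, γ ^ (t : ℕ) * r (τ.1 t.castSucc) (τ.2 t) := by
  -- A single sample: `E_b[ρ^k · R^k] = E_e[R^k]` for each group.
  have hone : ∀ k, ∑ τ : Traj (∀ d, Z d) (∀ d, Act d) T, trajP T d1 p πb τ *
      ((if 0 < trajP T d1 p πb τ then
        ∏ t' : Fin T,
          πek k (fun d => τ.1 t'.castSucc d.1) (fun d => τ.2 t' d.1) /
            πbk k (fun d => τ.1 t'.castSucc d.1) (fun d => τ.2 t' d.1)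
        else 0) *
        ∑ t : Fin T, γ ^ (t : ℕ) *
          rk k (fun d => τ.1 t.castSucc d.1) (fun d => τ.2 t d.1)) =
      ∑ τ : Traj (∀ d, Z d) (∀ d, Act d) T, trajP T d1 p πe τ *
        ∑ t : Fin T, γ ^ (t : ℕ) *
          rk k (fun d => τ.1 t.castSucc d.1) (fun d => τ.2 t d.1) := by
    intro k
    have hmix : ∀ j z, ∑ a, Function.update πbk k (πek k) j z a = 1 := by
      intro j z
      by_cases hj : j = k
      · subst hj
        simpa using hπek_sum j z
      · rw [Function.update_of_ne hj]
        exact hπbk_sum j z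
    refine Eq.trans ?_ (sum_trajP_congr_group hdisj hcover d1 p pk hpk_sum hp
      (fun s a => ∏ j, Function.update πbk k (πek k) j (fun d => s d.1) (fun d => a d.1)) πe
      (Function.update πbk k (πek k)) πek hmix hπek_sum (fun _ _ => rfl) hπe k
      (Function.update_self ..) T
      (fun x => ∑ t : Fin T, γ ^ (t : ℕ) * rk k (x.1 t.castSucc) (x.2 t)))
    refine Finset.sum_congr rfl fun τ _ => ?_
    rw [← trajP_mul_weight d1 p πb πbk πek hπb habs k T τ, ← mul_assoc]
    congr 1
    split_ifs with hpos
    · rfl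
    · -- Off the support of the behaviour law the weight is irrelevant.
      have h0 : 0 ≤ trajP T d1 p πb τ := by
        refine mul_nonneg (hd1_nonneg _) (Finset.prod_nonneg fun t _ => mul_nonneg ?_ ?_)
        · rw [hπb]; exact Finset.prod_nonneg fun j _ => hπbk_nonneg _ _ _
        · rw [hp]; exact Finset.prod_nonneg fun j _ => hpk_nonneg _ _ _ _
      rw [le_antisymm (not_lt.mp hpos) h0, zero_mul, zero_mul]
  have hmass : ∑ τ, trajP T d1 p πb τ = 1 := by
    refine sum_trajP_eq_one T d1 p πb hd1_sum (fun s a => ?_) (fun s => ?_)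
    · simp only [hp]
      exact sum_block_prod hdisj hcover Z
        (fun j => pk j (fun d => s d.1) (fun d => a d.1)) (fun j => hpk_sum j _ _)
    · simp only [hπb]
      exact sum_block_prod hdisj hcover Act
        (fun j => πbk j (fun d => s d.1)) (fun j => hπbk_sum j _)
  have hN' : (N : ℝ) ≠ 0 := by exact_mod_cast hN.ne'
  simp only [Finset.mul_sum (s := (Finset.univ : Finset (Fin K)))]
  rw [Finset.sum_comm]
  have hR : ∀ τ : Traj (∀ d, Z d) (∀ d, Act d) T,
      ∑ t : Fin T, γ ^ (t : ℕ) * r (τ.1 t.castSucc) (τ.2 t) =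
        ∑ k, ∑ t : Fin T, γ ^ (t : ℕ) *
          rk k (fun d => τ.1 t.castSucc d.1) (fun d => τ.2 t d.1) := by
    intro τ
    simp only [hr, Finset.mul_sum]
    exact Finset.sum_comm
  simp only [hR, Finset.mul_sum (s := (Finset.univ : Finset (Fin K)))]
  rw [Finset.sum_comm (s := (Finset.univ : Finset (Traj (∀ d, Z d) (∀ d, Act d) T)))]
  refine Finset.sum_congr rfl fun k _ => ?_
  rw [← hone k]
  simp only [mul_left_comm _ (1 / (N : ℝ))]
  rw [← Finset.mul_sum]
  simp only [Finset.mul_sum (s := (Finset.univ : Finset (Fin N)))]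
  rw [Finset.sum_comm]
  have hn := fun n : Fin N => sum_prod_mul_coord
    (fun _ : Fin N => Traj (∀ d, Z d) (∀ d, Act d) T)
    (fun _ => trajP T d1 p πb) (fun _ => hmass) n
    (fun τ => (if 0 < trajP T d1 p πb τ then
        ∏ t' : Fin T,
          πek k (fun d => τ.1 t'.castSucc d.1) (fun d => τ.2 t' d.1) /
            πbk k (fun d => τ.1 t'.castSucc d.1) (fun d => τ.2 t' d.1)
        else 0) *
        ∑ t : Fin T, γ ^ (t : ℕ) *
          rk k (fun d => τ.1 t.castSucc d.1) (fun d => τ.2 t d.1))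
  rw [Finset.sum_congr rfl fun n _ => hn n]
  simp only [Finset.sum_const, Finset.card_univ, Fintype.card_fin, nsmul_eq_mul]
  field_simp
end
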